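/- arXiv:2109.08362 — 2 statements merged into one kernel-verified Lean document; each statement's English description precedes it below -/
import Mathlib

section
/- Let y ∈ ℝ^d with ∇f(y) ≠ 0 and let r > 0 be such that inf_{z ∈ B(y,r)} ‖∇f(z)‖ > 0. Define π_y(r) := (inf_{z ∈ B(y,r)} ‖∇f(z)‖) / (sup_{z ∈ B(y,2r)} ‖∇²f(z)‖). Then the reach of the level set L_{f(y)} at the point y is at least min{r/2, π_y(r)}. -/
open Metric Set Filter Topology MeasureTheory

/-!
Let `p` and `q` be nearest points of the level set to `x`. Stationarity of the distance at `p`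
gives `x - p = l • ∇f p`, and since `‖x - p‖` is small compared with `‖∇f p‖ / K`, where `K` is a
Lipschitz constant of `∇f`, we have `|l| * K < 1`. As `p` and `q` are equidistant from `x`,
`‖q - p‖ ^ 2 = 2 * ⟪x - p, q - p⟫ = 2 * l * ⟪∇f p, q - p⟫`, while `f q = f p` and the second-order
Taylor estimate give `|⟪∇f p, q - p⟫| ≤ K / 2 * ‖q - p‖ ^ 2`. Hence
`‖q - p‖ ^ 2 ≤ |l| * K * ‖q - p‖ ^ 2`, which forces `q = p`.
-/

open InnerProductSpace
open scoped NNReal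

section Normed

variable {E F : Type*} [NormedAddCommGroup E] [NormedSpace ℝ E] [NormedAddCommGroup F]
  [NormedSpace ℝ F]

lemma norm_sub_sub_le_of_lipschitzOnWith_hasFDerivAt {f : E → F} {f' : E → E →L[ℝ] F} {s : Set E}
    {K : ℝ≥0} (hs : Convex ℝ s) (hf : ∀ z ∈ s, HasFDerivAt f (f' z) z)
    (hf' : LipschitzOnWith K f' s) {p q : E} (hp : p ∈ s) (hq : q ∈ s) :
    ‖f q - f p - f' p (q - p)‖ ≤ K / 2 * ‖q - p‖ ^ 2 := by
  set v := q - p with hv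
  have mem : ∀ t ∈ Icc (0 : ℝ) 1, p + t • v ∈ s := fun t ht => hs.add_smul_sub_mem hp hq ht
  have remainder_deriv : ∀ t ∈ Icc (0 : ℝ) 1,
      HasDerivAt (fun t : ℝ => f (p + t • v) - f p - t • f' p v)
        ((f' (p + t • v) - f' p) v) t := fun t ht => by
    have line_deriv : HasDerivAt (fun t : ℝ => p + t • v) v t := by
      simpa using ((hasDerivAt_id t).smul_const v).const_add p
    simpa using (((hf _ (mem t ht)).comp_hasDerivAt t line_deriv).sub_const (f p)).fun_sub
      ((hasDerivAt_id t).smul_const (f' p v))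
  have quadratic_deriv (t : ℝ) :
      HasDerivAt (fun t : ℝ => K / 2 * ‖v‖ ^ 2 * t ^ 2) (K * t * ‖v‖ ^ 2) t :=
    ((hasDerivAt_pow 2 t).const_mul (K / 2 * ‖v‖ ^ 2)).congr_deriv (by ring)
  have deriv_bound : ∀ t ∈ Ico (0 : ℝ) 1, ‖(f' (p + t • v) - f' p) v‖ ≤ K * t * ‖v‖ ^ 2 := by
    intro t ht
    calc ‖(f' (p + t • v) - f' p) v‖
      _ ≤ ‖f' (p + t • v) - f' p‖ * ‖v‖ := ContinuousLinearMap.le_opNorm _ _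
      _ ≤ K * ‖p + t • v - p‖ * ‖v‖ := by
          gcongr
          exact hf'.norm_sub_le (mem t (Ico_subset_Icc_self ht)) hp
      _ = K * t * ‖v‖ ^ 2 := by
          rw [add_sub_cancel_left, norm_smul, Real.norm_of_nonneg ht.1]
          ring
  simpa [hv] using image_norm_le_of_norm_deriv_right_le_deriv_boundary
    (fun t ht => (remainder_deriv t ht).continuousAt.continuousWithinAt)
    (fun t ht => (remainder_deriv t (Ico_subset_Icc_self ht)).hasDerivWithinAt) (by simp)
    quadratic_deriv deriv_bound (right_mem_Icc.2 zero_le_one)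

lemma lipschitzOnWith_ball_sSup_norm_fderiv [ProperSpace E] {G : E → F} (hG : ContDiff ℝ 1 G)
    (y : E) (R : ℝ) :
    LipschitzOnWith (sSup ((fun z => ‖fderiv ℝ G z‖) '' ball y R)).toNNReal G (ball y R) := by
  have bdd : BddAbove ((fun z => ‖fderiv ℝ G z‖) '' ball y R) :=
    ((isCompact_closedBall y R).bddAbove_image
      (hG.continuous_fderiv one_ne_zero).norm.continuousOn).mono
        (image_mono ball_subset_closedBall)
  refine (convex_ball y R).lipschitzOnWith_of_nnnorm_fderiv_le
    (fun z _ => hG.differentiable one_ne_zero z) fun z hz => ?_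
  exact NNReal.le_toNNReal_of_coe_le (le_csSup bdd (mem_image_of_mem _ hz))

end Normed

section Hilbert

variable {E : Type*} [NormedAddCommGroup E] [InnerProductSpace ℝ E] [CompleteSpace E]
  {f : E → ℝ} {g : E → E} {s : Set E} {K : ℝ≥0} {x p q : E}

lemma contDiff_gradient {m n : WithTop ℕ∞} (hf : ContDiff ℝ n f) (hmn : m + 1 ≤ n) :
    ContDiff ℝ m (gradient f) :=
  (toDual ℝ E).symm.contDiff.comp (hf.fderiv_right hmn)

lemma exists_sub_eq_smul_of_isMinOn_dist_levelSet {ν : E}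
    (hf : HasStrictFDerivAt f (toDual ℝ E ν) p) (hν : ν ≠ 0)
    (hmin : IsMinOn (dist x) {z | f z = f p} p) : ∃ l : ℝ, x - p = l • ν := by
  have hmin_sq : IsMinOn (fun z => ‖z - x‖ ^ 2) {z | f z = f p} p := fun z hz => by
    have hle : dist x p ≤ dist x z := hmin hz
    rw [dist_comm x p, dist_comm x z, dist_eq_norm, dist_eq_norm] at hle
    exact pow_le_pow_left₀ (norm_nonneg _) hle 2
  have hsq : HasStrictFDerivAt (fun z => ‖z - x‖ ^ 2) (toDual ℝ E ((2 : ℝ) • (p - x))) p :=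
    ((hasStrictFDerivAt_norm_sq (p - x)).comp p ((hasStrictFDerivAt_id p).sub_const x)).congr_fderiv
      (by ext v; simp)
  obtain ⟨a, b, hab, hmul⟩ :=
    IsLocalExtrOn.exists_multipliers_of_hasStrictFDerivAt_1d (.inl hmin_sq.localize) hf hsq
  have hlin : a • ν = (2 * b) • (x - p) := by
    have hdual : toDual ℝ E (a • ν + b • (2 : ℝ) • (p - x)) = 0 := by simpa using hmul
    rw [map_eq_zero_iff _ (toDual ℝ E).injective] at hdual
    rw [eq_neg_of_add_eq_zero_left hdual]
    module
  have hb : b ≠ 0 := by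
    rintro rfl
    simp_all
  exact ⟨(2 * b)⁻¹ * a, by rw [mul_smul, hlin, inv_smul_smul₀ (by simpa using hb)]⟩

lemma eq_of_dist_eq_of_sub_eq_smul_gradient (hs : Convex ℝ s)
    (hf : ∀ z ∈ s, HasGradientAt f (g z) z) (hg : LipschitzOnWith K g s) (hp : p ∈ s) (hq : q ∈ s)
    (hfpq : f q = f p) (hdist : dist x q = dist x p) {l : ℝ} (hl : x - p = l • g p)
    (hlK : |l| * K < 1) : q = p := by
  have taylor : |inner ℝ (g p) (q - p)| ≤ K / 2 * ‖q - p‖ ^ 2 := by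
    have hdual : LipschitzOnWith K (toDual ℝ E ∘ g) s := by
      simpa using (toDual ℝ E).lipschitz.comp_lipschitzOnWith hg
    simpa [hfpq] using
      norm_sub_sub_le_of_lipschitzOnWith_hasFDerivAt hs (fun z hz => (hf z hz).hasFDerivAt)
        hdual hp hq
  have equidistant : ‖q - p‖ ^ 2 = 2 * inner ℝ (x - p) (q - p) := by
    have hexpand := norm_sub_sq_real (x - p) (q - p)
    rw [sub_sub_sub_cancel_right, ← dist_eq_norm, hdist, dist_eq_norm] at hexpand
    linarith
  have contraction : ‖q - p‖ ^ 2 ≤ |l| * K * ‖q - p‖ ^ 2 :=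
    calc ‖q - p‖ ^ 2
      _ = 2 * (l * inner ℝ (g p) (q - p)) := by rw [equidistant, hl, real_inner_smul_left]
      _ ≤ 2 * (|l| * |inner ℝ (g p) (q - p)|) := by
          rw [← abs_mul]
          gcongr
          exact le_abs_self _
      _ ≤ 2 * (|l| * (K / 2 * ‖q - p‖ ^ 2)) := by gcongr
      _ = |l| * K * ‖q - p‖ ^ 2 := by ring
  by_contra hne
  have hpos : 0 < ‖q - p‖ ^ 2 := pow_pos (norm_sub_pos_iff.2 hne) 2
  exact contraction.not_gt (mul_lt_of_lt_one_left hpos hlK)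

lemma eq_of_isMinOn_dist_levelSet (hs : Convex ℝ s) (hso : IsOpen s)
    (hf : ∀ z ∈ s, HasGradientAt f (g z) z) (hg : LipschitzOnWith K g s) (hp : p ∈ s) (hq : q ∈ s)
    (hmin : IsMinOn (dist x) {z | f z = f p} p) (hK : dist x p * K < ‖g p‖)
    (hfpq : f q = f p) (hdist : dist x q = dist x p) : q = p := by
  have hgp : 0 < ‖g p‖ := lt_of_le_of_lt (by positivity) hK
  have hstrict : HasStrictFDerivAt f (toDual ℝ E (g p)) p :=
    hasStrictFDerivAt_of_hasFDerivAt_of_continuousAt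
      (eventually_of_mem (hso.mem_nhds hp) fun z hz => (hf z hz).hasFDerivAt)
      ((toDual ℝ E).continuous.continuousAt.comp (hg.continuousOn.continuousAt (hso.mem_nhds hp)))
  obtain ⟨l, hl⟩ := exists_sub_eq_smul_of_isMinOn_dist_levelSet hstrict (norm_pos_iff.1 hgp) hmin
  have hlK : |l| * K < 1 := by
    rw [dist_eq_norm, hl, norm_smul, Real.norm_eq_abs, mul_right_comm] at hK
    exact (mul_lt_iff_lt_one_left hgp).1 hK
  exact eq_of_dist_eq_of_sub_eq_smul_gradient hs hf hg hp hq hfpq hdist hl hlK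

end Hilbert

section FiniteDimensional

variable {E : Type*} [NormedAddCommGroup E] [InnerProductSpace ℝ E] [FiniteDimensional ℝ E]
  {f : E → ℝ} {y : E} {r : ℝ}

lemma existsUnique_dist_eq_infDist_levelSet {g : E → E} {K : ℝ≥0} {m : ℝ} (hfc : Continuous f)
    (hf : ∀ z ∈ ball y r, HasGradientAt f (g z) z) (hg : LipschitzOnWith K g (ball y r))
    (hm : ∀ z ∈ ball y r, m ≤ ‖g z‖) {x : E} (hxr : dist x y < r / 2)
    (hxK : dist x y * K < m) :
    ∃! p, p ∈ {z | f z = f y} ∧ dist x p = infDist x {z | f z = f y} := by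
  have hclosed : IsClosed {z | f z = f y} := isClosed_eq hfc continuous_const
  have hle : infDist x {z | f z = f y} ≤ dist x y := infDist_le_dist_of_mem rfl
  have nearest_mem_ball : ∀ z, dist x z = infDist x {z | f z = f y} → z ∈ ball y r := by
    intro z hz
    have := dist_triangle_left z y x
    rw [mem_ball]
    linarith
  obtain ⟨p, hpf : f p = f y, hp⟩ := hclosed.exists_infDist_eq_dist ⟨y, rfl⟩ x
  refine ⟨p, ⟨hpf, hp.symm⟩, fun q ⟨(hqf : f q = f y), hq⟩ => ?_⟩
  have hpb := nearest_mem_ball p hp.symm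
  have hmin : IsMinOn (dist x) {z | f z = f p} p := fun z (hz : f z = f p) =>
    hp.symm.trans_le (infDist_le_dist_of_mem (hz.trans hpf))
  have hK : dist x p * K < ‖g p‖ :=
    calc dist x p * K
      _ ≤ dist x y * K := by gcongr; exact hp.symm.trans_le hle
      _ < m := hxK
      _ ≤ ‖g p‖ := hm p hpb
  exact eq_of_isMinOn_dist_levelSet (convex_ball y r) isOpen_ball hf hg hpb
    (nearest_mem_ball q hq) hmin hK (hqf.trans hpf.symm) (hq.trans hp)

theorem pointwise_reach_bound_general (hf : ContDiff ℝ 2 f) :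
    ∀ x ∈ ball y
      (min (r / 2)
        (sInf ((fun z => ‖gradient f z‖) '' ball y r) /
          sSup ((fun z => ‖fderiv ℝ (gradient f) z‖) '' ball y (2 * r)))),
      ∃! p, p ∈ {z | f z = f y} ∧ dist x p = infDist x {z | f z = f y} := by
  intro x hx
  obtain ⟨hxr, hxπ⟩ := lt_min_iff.1 (mem_ball.1 hx)
  set m := sInf ((fun z => ‖gradient f z‖) '' ball y r)
  set M := sSup ((fun z => ‖fderiv ℝ (gradient f) z‖) '' ball y (2 * r))
  have hm : ∀ z ∈ ball y r, m ≤ ‖gradient f z‖ := fun z hz =>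
    csInf_le ⟨0, forall_mem_image.2 fun _ _ => norm_nonneg _⟩ (mem_image_of_mem _ hz)
  have hm0 : 0 ≤ m := Real.sInf_nonneg (forall_mem_image.2 fun _ _ => norm_nonneg _)
  -- For `M = 0` the quotient `m / M` is `0` in Lean and the ball is empty.
  have hM : 0 < M := by
    by_contra! hM_nonpos
    exact (dist_nonneg.trans_lt hxπ).not_ge (div_nonpos_of_nonneg_of_nonpos hm0 hM_nonpos)
  have hball : ball y r ⊆ ball y (2 * r) :=
    ball_subset_ball (by linarith [dist_nonneg (x := x) (y := y)])
  refine existsUnique_dist_eq_infDist_levelSet hf.continuous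
    (fun z _ => (hf.differentiable two_ne_zero z).hasGradientAt)
    ((lipschitzOnWith_ball_sSup_norm_fderiv (contDiff_gradient hf one_add_one_eq_two.le)
      y (2 * r)).mono hball) hm hxr ?_
  rw [Real.coe_toNNReal M hM.le]
  exact (lt_div_iff₀ hM).1 hxπ

end FiniteDimensional

/-- pointwise reach bound, after Federer Lem 4.11: If `∇f(y) ≠ 0` and
`inf_{z ∈ B(y,r)} ‖∇f(z)‖ > 0`, then with
`π_y(r) = (inf_{z ∈ B(y,r)} ‖∇f(z)‖) / (sup_{z ∈ B(y,2r)} ‖∇²f(z)‖)`, the reach of the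
level set `L_{f(y)}` at `y` is at least `min (r/2) (π_y r)`: every point of the open ball
`B(y, min (r/2) (π_y r))` has a unique nearest point in `L_{f(y)}`. -/
theorem pointwise_reach_bound {d : ℕ} (f : EuclideanSpace ℝ (Fin d) → ℝ)
    (hf : ContDiff ℝ 2 f) (hf_nonneg : ∀ x, 0 ≤ f x) (hf_int : ∫ x, f x = 1)
    (y : EuclideanSpace ℝ (Fin d)) (hy : gradient f y ≠ 0)
    (r : ℝ) (hr : 0 < r)
    (hinf : 0 < sInf ((fun z => ‖gradient f z‖) '' Metric.ball y r)) :
    ∀ x ∈ Metric.ball y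
      (min (r / 2)
        (sInf ((fun z => ‖gradient f z‖) '' Metric.ball y r) /
          sSup ((fun z => ‖fderiv ℝ (gradient f) z‖) '' Metric.ball y (2 * r)))),
      ∃! p, p ∈ {z : EuclideanSpace ℝ (Fin d) | f z = f y} ∧
        dist x p = Metric.infDist x {z : EuclideanSpace ℝ (Fin d) | f z = f y} :=
  pointwise_reach_bound_general hf
end

section
/- Suppose t ∈ (0, max f), L_t is nonempty and compact, and ∇f ≠ 0 on L_t. For sufficiently small η > 0 there exist β ∈ (0, η) and c₀ > 0 such that on the open set G := {x : t + η − β < f(x) < t + η + β} one has ‖∇f‖ > c₀, and the descent time τ(x) := inf{s > 0 : f(x − s N(x)) = t}, with N(x) := ∇f(x)/‖∇f(x)‖, is well-defined and satisfies 0 < τ(x) < 4η/c₀ for all x ∈ G. -/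
open Metric Set Filter Topology MeasureTheory

/-- The descent time `τ(x) = inf{s > 0 : f(x − s N(x)) = t}` along the unit normal
direction `N(x) = ∇f(x)/‖∇f(x)‖`. -/
noncomputable def descTime {d : ℕ} (f : EuclideanSpace ℝ (Fin d) → ℝ) (t : ℝ)
    (x : EuclideanSpace ℝ (Fin d)) : ℝ :=
  sInf {s : ℝ | 0 < s ∧ f (x - s • (‖gradient f x‖⁻¹ • gradient f x)) = t}

open scoped Gradient Pointwise

/-!
If `{t < f}` left the ball containing the level set `{f = t}`, the open set of its points outside
that ball would be stable under dilation by factors at least `1` (`f` cannot cross the value `t`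
along the ray) and would have infinite measure; so `{t ≤ f}` is compact. Compactness then gives a
single `c` with `‖∇ f‖ > c` wherever `f` is at least `t` and close to it, and a single `δ` such that
`∇ f` varies by at most `c / 2` within distance `δ`. Along the direction `-∇ f / ‖∇ f‖` the function
therefore decreases at rate more than `c / 2`, and it falls below `t` before time `2 (f x - t) / c`,
as long as this time is smaller than `δ`.
-/

section Superlevel

variable {E : Type*} [NormedAddCommGroup E] [NormedSpace ℝ E] {f : E → ℝ} {t : ℝ}

lemma lt_apply_smul_of_norm_level_le {R r : ℝ} {x : E} (hf : Continuous f)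
    (hR : ∀ y, f y = t → ‖y‖ ≤ R) (hx : t < f x) (hRx : R < ‖x‖) (hr : 1 ≤ r) :
    t < f (r • x) := by
  by_contra! hle
  have hray : ContinuousOn (fun s : ℝ => f (s • x)) (Icc 1 r) := by fun_prop
  obtain ⟨s, hs, hst⟩ := intermediate_value_Icc' hr hray ⟨hle, by simpa only [one_smul] using hx.le⟩
  have hnorm : ‖x‖ ≤ ‖s • x‖ := by
    rw [norm_smul, Real.norm_of_nonneg (zero_le_one.trans hs.1)]
    exact le_mul_of_one_le_left (norm_nonneg x) hs.1
  exact ((hRx.trans_le hnorm).trans_le (hR _ hst)).false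

variable [FiniteDimensional ℝ E] [MeasurableSpace E] [BorelSpace E]
  (μ : Measure E) [μ.IsAddHaarMeasure]

lemma measure_eq_zero_of_smul_set_subset [Nontrivial E] {s : Set E} {r : ℝ} (hr : 1 < r)
    (hs : r • s ⊆ s) (hfin : μ s ≠ ⊤) : μ s = 0 := by
  by_contra hzero
  have hpow : 1 < ENNReal.ofReal (r ^ Module.finrank ℝ E) :=
    ENNReal.one_lt_ofReal.2 (one_lt_pow₀ hr Module.finrank_pos.ne')
  have hle : ENNReal.ofReal (r ^ Module.finrank ℝ E) * μ s ≤ 1 * μ s := by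
    rw [← Measure.addHaar_smul_of_nonneg μ (zero_le_one.trans hr.le), one_mul]
    exact measure_mono hs
  exact hpow.not_ge ((ENNReal.mul_le_mul_iff_left hzero hfin).1 hle)

lemma isCompact_superlevel_of_isBounded_level (hf : Continuous f)
    (hfin : μ {x | t ≤ f x} ≠ ⊤) (hbdd : Bornology.IsBounded {x | f x = t}) :
    IsCompact {x | t ≤ f x} := by
  rcases subsingleton_or_nontrivial E with _ | _
  · exact (Set.toFinite _).isCompact
  obtain ⟨R, -, hR⟩ := hbdd.exists_pos_norm_le
  let U : Set E := {x | t < f x ∧ R < ‖x‖}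
  have hUopen : IsOpen U :=
    (isOpen_lt continuous_const hf).inter (isOpen_lt continuous_const continuous_norm)
  have hUsmul : (2 : ℝ) • U ⊆ U := by
    rintro _ ⟨x, ⟨hx, hRx⟩, rfl⟩
    refine ⟨lt_apply_smul_of_norm_level_le hf hR hx hRx one_le_two, ?_⟩
    rw [norm_smul, Real.norm_ofNat]
    linarith [norm_nonneg x]
  have hUfin : μ U ≠ ⊤ := measure_ne_top_of_subset (fun x hx => hx.1.le) hfin
  have hUempty : U = ∅ :=
    hUopen.measure_eq_zero_iff μ |>.1 (measure_eq_zero_of_smul_set_subset μ one_lt_two hUsmul hUfin)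
  refine (isCompact_closedBall 0 R).of_isClosed_subset (isClosed_le continuous_const hf) ?_
  intro x hx
  rw [mem_closedBall_zero_iff]
  by_contra! hRx
  have hlt : t < f x := lt_of_le_of_ne hx fun h => hRx.not_ge (hR x h.symm)
  exact hUempty.subset ⟨hlt, hRx⟩

end Superlevel

lemma exists_pos_forall_lt_of_lt_add {X : Type*} [TopologicalSpace X] {K : Set X} {f g : X → ℝ}
    {t : ℝ} (hK : IsCompact K) (hf : ContinuousOn f K) (hg : ContinuousOn g K)
    (ht : ∀ x ∈ K, t ≤ f x) (hpos : ∀ x ∈ K, f x = t → 0 < g x) :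
    ∃ c > 0, ∀ x ∈ K, f x < t + c → c < g x := by
  have hmax : ∀ x ∈ K, 0 < max (f x - t) (g x) := fun x hx =>
    (ht x hx).eq_or_lt.elim (fun h => lt_max_of_lt_right (hpos x hx h.symm))
      fun h => lt_max_of_lt_left (sub_pos.2 h)
  obtain ⟨m, hm, hmin⟩ := hK.exists_forall_le' ((hf.sub continuousOn_const).sup hg) hmax
  refine ⟨m / 2, half_pos hm, fun x hx hfx => ?_⟩
  have hle : m ≤ f x - t ∨ m ≤ g x := le_max_iff.1 (hmin x hx)
  rcases hle with hle | hle <;> linarith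

lemma exists_pos_forall_dist_lt_of_isCompact {X Y : Type*} [PseudoMetricSpace X]
    [PseudoMetricSpace Y] {K : Set X} {g : X → Y} {ε : ℝ} (hK : IsCompact K)
    (hg : ∀ x ∈ K, ContinuousAt g x) (hε : 0 < ε) :
    ∃ δ > 0, ∀ x ∈ K, ∀ y, dist x y < δ → dist (g x) (g y) < ε := by
  obtain ⟨δ, hδ, h⟩ := mem_uniformity_dist.1
    (hK.uniformContinuousAt_of_continuousAt g hg (dist_mem_uniformity hε))
  exact ⟨δ, hδ, fun _ hx _ hxy => h hxy hx⟩

section Descent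

variable {E : Type*} [NormedAddCommGroup E] [InnerProductSpace ℝ E] [CompleteSpace E]
  {f : E → ℝ} {t : ℝ} {x : E}

/-- The paper's `N(x) = ∇ f x / ‖∇ f x‖`, normal at `x` to the level set of `f` through `x`; it is
`0` at critical points of `f`. -/
noncomputable def unitNormal (f : E → ℝ) (x : E) : E :=
  NormedSpace.normalize (∇ f x)

/-- The positive times at which the line `s ↦ x - s • unitNormal f x` meets the level set `{f = t}`.
On `EuclideanSpace ℝ (Fin d)`, the infimum of this set is `descTime f t x`. -/
def descentTimes (f : E → ℝ) (t : ℝ) (x : E) : Set ℝ :=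
  {s | 0 < s ∧ f (x - s • unitNormal f x) = t}

lemma continuous_gradient (hf : ContDiff ℝ 1 f) : Continuous (∇ f) :=
  (InnerProductSpace.toDual ℝ E).symm.continuous.comp (hf.continuous_fderiv one_ne_zero)

lemma isLeast_sInf_descentTimes (hf : Continuous f) (hx : f x ≠ t)
    (hne : (descentTimes f t x).Nonempty) :
    IsLeast (descentTimes f t x) (sInf (descentTimes f t x)) := by
  have hbdd : BddBelow (descentTimes f t x) := ⟨0, fun s hs => hs.1.le⟩
  have hclosed : IsClosed (descentTimes f t x) := by
    have hIci : descentTimes f t x = {s | 0 ≤ s ∧ f (x - s • unitNormal f x) = t} := by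
      ext s
      refine ⟨fun hs => ⟨hs.1.le, hs.2⟩, fun hs => ⟨hs.1.lt_of_ne ?_, hs.2⟩⟩
      rintro rfl
      exact hx (by simpa only [zero_smul, sub_zero] using hs.2)
    rw [hIci]
    exact isClosed_Ici.inter (isClosed_eq (by fun_prop) continuous_const)
  exact ⟨hclosed.csInf_mem hne hbdd, fun s hs => csInf_le hbdd hs⟩

lemma fderiv_apply_unitNormal : fderiv ℝ f x (unitNormal f x) = ‖∇ f x‖ := by
  rw [← inner_gradient_left, unitNormal, NormedSpace.normalize, real_inner_smul_right,
    real_inner_self_eq_norm_mul_norm, ← mul_assoc, inv_mul_mul_self]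

lemma norm_unitNormal_le_one : ‖unitNormal f x‖ ≤ 1 := by
  rcases eq_or_ne (∇ f x) 0 with hzero | hne
  · simp only [unitNormal, hzero, NormedSpace.normalize_zero_eq_zero, norm_zero, zero_le_one]
  · exact (NormedSpace.norm_normalize hne).le

lemma apply_sub_smul_unitNormal_le {s C : ℝ} (hs : 0 ≤ s)
    (hf : ∀ y ∈ closedBall x s, DifferentiableAt ℝ f y)
    (hC : ∀ y ∈ closedBall x s, ‖∇ f y - ∇ f x‖ ≤ C) :
    f (x - s • unitNormal f x) ≤ f x - s * (‖∇ f x‖ - C) := by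
  have hsN : ‖s • unitNormal f x‖ ≤ s := by
    rw [norm_smul, Real.norm_of_nonneg hs]
    exact mul_le_of_le_one_right hs norm_unitNormal_le_one
  have hx : x ∈ closedBall x s := mem_closedBall_self hs
  have hC0 : 0 ≤ C := (norm_nonneg _).trans (hC x hx)
  have hC' : ∀ y ∈ closedBall x s, ‖fderiv ℝ f y - fderiv ℝ f x‖ ≤ C := fun y hy => by
    rw [← toDual_gradient, ← toDual_gradient, ← map_sub, LinearIsometryEquiv.norm_map]
    exact hC y hy
  have hmvt := (convex_closedBall x s).norm_image_sub_le_of_norm_fderiv_le' hf hC' hx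
    (y := x - s • unitNormal f x) (by rwa [mem_closedBall_iff_norm, sub_sub_cancel_left, norm_neg])
  rw [sub_sub_cancel_left, map_neg, map_smul, fderiv_apply_unitNormal, norm_neg, smul_eq_mul,
    sub_neg_eq_add] at hmvt
  linarith [(Real.le_norm_self _).trans hmvt, mul_le_mul_of_nonneg_left hsN hC0]

lemma exists_mem_descentTimes_lt {c : ℝ} (hf : Differentiable ℝ f) (hc : 0 < c) (hx : t < f x)
    (hgrad : c < ‖∇ f x‖)
    (hosc : ∀ y ∈ closedBall x (2 * (f x - t) / c), ‖∇ f y - ∇ f x‖ ≤ c / 2) :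
    ∃ s ∈ descentTimes f t x, s < 2 * (f x - t) / c := by
  set S := 2 * (f x - t) / c with hS
  have hSpos : 0 < S := div_pos (mul_pos two_pos (sub_pos.2 hx)) hc
  have hSt : f (x - S • unitNormal f x) < t := calc
    f (x - S • unitNormal f x) ≤ f x - S * (‖∇ f x‖ - c / 2) :=
      apply_sub_smul_unitNormal_le hSpos.le (fun y _ => hf y) hosc
    _ < f x - S * (c / 2) := by gcongr; linarith
    _ = t := by rw [hS]; field_simp; ring
  have hcont : ContinuousOn (fun s : ℝ => f (x - s • unitNormal f x)) (Icc 0 S) := by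
    have := hf.continuous
    fun_prop
  obtain ⟨s, hs, hst⟩ := intermediate_value_Ioo' hSpos.le hcont
    ⟨hSt, by simpa only [zero_smul, sub_zero] using hx⟩
  exact ⟨s, ⟨hs.1, hst⟩, hs.2⟩

theorem exists_forall_sInf_descentTimes_lt (hf : ContDiff ℝ 1 f)
    (hK : IsCompact {x | t ≤ f x}) (hreg : ∀ x, f x = t → ∇ f x ≠ 0) :
    ∃ c > 0, ∃ r > 0, ∀ x, t < f x → f x < t + r → c < ‖∇ f x‖ ∧
      IsLeast (descentTimes f t x) (sInf (descentTimes f t x)) ∧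
      sInf (descentTimes f t x) < 2 * (f x - t) / c := by
  have hgrad : Continuous (∇ f) := continuous_gradient hf
  obtain ⟨c, hc, hcK⟩ := exists_pos_forall_lt_of_lt_add hK hf.continuous.continuousOn
    hgrad.norm.continuousOn (fun x hx => hx) fun x _ hx => norm_pos_iff.2 (hreg x hx)
  obtain ⟨δ, hδ, hδK⟩ := exists_pos_forall_dist_lt_of_isCompact hK
    (fun x _ => hgrad.continuousAt) (half_pos hc)
  refine ⟨c, hc, min c (c * δ / 2), by positivity, fun x hx hxr => ?_⟩
  have hxc : c < ‖∇ f x‖ := hcK x hx.le (hxr.trans_le (by gcongr; exact min_le_left _ _))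
  have hxδ : 2 * (f x - t) / c < δ := by
    rw [div_lt_iff₀ hc]
    linarith [min_le_right c (c * δ / 2)]
  have hosc : ∀ y ∈ closedBall x (2 * (f x - t) / c), ‖∇ f y - ∇ f x‖ ≤ c / 2 := fun y hy => by
    rw [← dist_eq_norm, dist_comm]
    exact (hδK x hx.le y ((mem_closedBall'.1 hy).trans_lt hxδ)).le
  obtain ⟨s, hs, hslt⟩ := exists_mem_descentTimes_lt (hf.differentiable one_ne_zero) hc hx hxc hosc
  have hleast := isLeast_sInf_descentTimes hf.continuous hx.ne' ⟨s, hs⟩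
  exact ⟨hxc, hleast, (hleast.2 hs).trans_lt hslt⟩

end Descent

theorem descent_time_bounded_general {E : Type*} [NormedAddCommGroup E] [InnerProductSpace ℝ E]
    [FiniteDimensional ℝ E] [MeasurableSpace E] [BorelSpace E] (μ : Measure E)
    [μ.IsAddHaarMeasure] {f : E → ℝ} {t : ℝ} (hf : ContDiff ℝ 1 f)
    (hfin : μ {x | t ≤ f x} ≠ ⊤) (hbdd : Bornology.IsBounded {x | f x = t})
    (hreg : ∀ x, f x = t → ∇ f x ≠ 0) :
    ∃ c₀ > 0, ∃ η₀ > 0, ∀ η β : ℝ, η < η₀ → β < η →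
      (∀ x, t + η - β < f x → f x < t + η + β → c₀ < ‖∇ f x‖) ∧
      (∀ x, t + η - β < f x → f x < t + η + β →
        (descentTimes f t x).Nonempty ∧
        0 < sInf (descentTimes f t x) ∧ sInf (descentTimes f t x) < 4 * η / c₀ ∧
        f (x - sInf (descentTimes f t x) • unitNormal f x) = t) := by
  obtain ⟨c, hc, r, hr, h⟩ := exists_forall_sInf_descentTimes_lt hf
    (isCompact_superlevel_of_isBounded_level μ hf.continuous hfin hbdd) hreg
  refine ⟨c, hc, r / 2, half_pos hr, fun η β hη hβ =>
    ⟨fun x hx hx' => (h x (by linarith) (by linarith)).1, fun x hx hx' => ?_⟩⟩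
  obtain ⟨-, hleast, hlt⟩ := h x (by linarith) (by linarith)
  have hbound : 2 * (f x - t) / c ≤ 4 * η / c := div_le_div_of_nonneg_right (by linarith) hc.le
  exact ⟨hleast.nonempty, hleast.1.1, hlt.trans_le hbound, hleast.1.2⟩

/-- If `L_t` is nonempty, compact, and free of critical points, then for all
sufficiently small `η > 0` there are `β ∈ (0, η)` and `c₀ > 0` such that, on the band
`G = {x : t + η − β < f x < t + η + β}`, one has `‖∇f‖ > c₀` and the descent time
`τ(x) = inf{s > 0 : f(x − s N(x)) = t}` is well-defined (the set is nonempty and the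
infimum is attained) with `0 < τ(x) < 4η/c₀`. -/
theorem descent_time_bounded {d : ℕ} (f : EuclideanSpace ℝ (Fin d) → ℝ)
    (hf : ContDiff ℝ 2 f) (hf_nonneg : ∀ x, 0 ≤ f x) (hf_int : ∫ x, f x = 1)
    (t : ℝ) (ht : 0 < t) (ht_max : ∃ z, t < f z)
    (hne : {x : EuclideanSpace ℝ (Fin d) | f x = t}.Nonempty)
    (hcomp : IsCompact {x : EuclideanSpace ℝ (Fin d) | f x = t})
    (hreg : ∀ x, f x = t → gradient f x ≠ 0) :
    ∃ η₀ > 0, ∀ η : ℝ, 0 < η → η < η₀ →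
      ∃ β c₀ : ℝ, 0 < β ∧ β < η ∧ 0 < c₀ ∧
        (∀ x : EuclideanSpace ℝ (Fin d),
          t + η - β < f x → f x < t + η + β → c₀ < ‖gradient f x‖) ∧
        (∀ x : EuclideanSpace ℝ (Fin d), t + η - β < f x → f x < t + η + β →
          (∃ s : ℝ, 0 < s ∧ f (x - s • (‖gradient f x‖⁻¹ • gradient f x)) = t) ∧
          0 < descTime f t x ∧ descTime f t x < 4 * η / c₀ ∧
          f (x - descTime f t x • (‖gradient f x‖⁻¹ • gradient f x)) = t) := by
  obtain ⟨c₀, hc₀, η₀, hη₀, h⟩ := descent_time_bounded_general volume (hf.of_le one_le_two)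
    ((integrable_of_integral_eq_one hf_int).measure_ge_lt_top ht).ne hcomp.isBounded hreg
  exact ⟨η₀, hη₀, fun η hη hlt => ⟨η / 2, c₀, half_pos hη, half_lt_self hη, hc₀,
    h η (η / 2) hlt (half_lt_self hη)⟩⟩
end
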